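/- Let π(x,y) = (2y(y−x+2)/(x−y)², y²/(x−y)²) for x ≠ y, considered over the finite field 𝔽_p = ZMod p for a prime p. There exists N such that for every prime p ≥ N the following are equivalent: (1) there exists (x,y) ∈ 𝔽_p² such that the points z₀ = (x,y), z₁ = π(z₀), z₂ = π(z₁) each have distinct coordinates, π(z₂) = z₀, and π(z₀) ≠ z₀ (i.e., π has a point of period exactly 3 over 𝔽_p); (2) p mod 13 ∈ {1, 5, 8, 12}, or p mod 7 ∈ {1, 6}. -/

import Mathlib

/-- The Pappus–Steiner map `π(x,y) = (2y(y−x+2)/(x−y)², y²/(x−y)²)`. -/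
def pap {k : Type*} [Field k] (z : k × k) : k × k :=
  (2 * z.2 * (z.2 - z.1 + 2) / (z.1 - z.2) ^ 2, z.2 ^ 2 / (z.1 - z.2) ^ 2)


/-- An element of the algebraic closure fixed by Frobenius lies in the prime field. -/
lemma frob_fixed_mem (p : ℕ) [Fact p.Prime] (x : AlgebraicClosure (ZMod p)) (h : x ^ p = x) :
    ∃ c : ZMod p, algebraMap (ZMod p) (AlgebraicClosure (ZMod p)) c = x := by
  have hs : (Polynomial.X ^ p - Polynomial.X : Polynomial (ZMod p)).Splits := by
    have := FiniteField.splits_X_pow_card_sub_X (K := ZMod p) (p := p)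
    simpa using this
  have h0 : (Polynomial.X ^ p - Polynomial.X : Polynomial (ZMod p)) ≠ 0 :=
    FiniteField.X_pow_card_sub_X_ne_zero _ (Fact.out : p.Prime).one_lt
  have := hs.mem_range_of_isRoot (i := algebraMap (ZMod p) (AlgebraicClosure (ZMod p))) h0 (x := x)
    (by simp [h])
  exact this

lemma exists_zeta (K : Type*) [Field K] [IsAlgClosed K] (q : ℕ) [Fact q.Prime] :
    ∃ z : K, ∑ i ∈ Finset.range q, z ^ i = 0 := by
  have hq : 0 < q := (Fact.out : q.Prime).pos
  obtain ⟨z, hz⟩ := IsAlgClosed.exists_root (Polynomial.cyclotomic q K)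
    (Polynomial.degree_cyclotomic_pos q K hq).ne'
  refine ⟨z, ?_⟩
  rw [Polynomial.cyclotomic_prime] at hz
  simpa [Polynomial.eval_finsetSum] using hz

lemma natCast_ne (p : ℕ) (hN : 14 ≤ p) (q : ℕ) (h0 : 0 < q) (hq : q < 14) :
    (q : ZMod p) ≠ 0 := by
  intro h
  rw [ZMod.natCast_eq_zero_iff] at h
  have := Nat.le_of_dvd h0 h
  omega

section periods
variable {K : Type*} [Field K]

lemma per13 (z : K) (h : ∑ i ∈ Finset.range 13, z ^ i = 0) (a b c : K)
    (ha : a = z + z ^ 5 + z ^ 8 + z ^ 12) (hb : b = z ^ 2 + z ^ 10 + z ^ 3 + z ^ 11)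
    (hc : c = z ^ 4 + z ^ 7 + z ^ 6 + z ^ 9) :
    z ^ 13 = 1 ∧ a + b + c = -1 ∧ a * b + b * c + c * a = -4 ∧ a * b * c = -1 := by
  simp only [Finset.sum_range_succ, Finset.sum_range_zero] at h
  have h13 : z ^ 13 = 1 := by linear_combination (z - 1) * h
  have e1 : a + b + c = -1 := by subst ha hb hc; linear_combination h
  refine ⟨h13, e1, ?_, ?_⟩
  · subst ha hb hc; grind
  · subst ha hb hc; grind

lemma per7 (z : K) (h : ∑ i ∈ Finset.range 7, z ^ i = 0) (a b c : K)
    (ha : a = z + z ^ 6) (hb : b = z ^ 2 + z ^ 5)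
    (hc : c = z ^ 3 + z ^ 4) :
    z ^ 7 = 1 ∧ a + b + c = -1 ∧ a * b + b * c + c * a = -2 ∧ a * b * c = 1 := by
  simp only [Finset.sum_range_succ, Finset.sum_range_zero] at h
  have h13 : z ^ 7 = 1 := by linear_combination (z - 1) * h
  have e1 : a + b + c = -1 := by subst ha hb hc; linear_combination h
  refine ⟨h13, e1, ?_, ?_⟩
  · subst ha hb hc; grind
  · subst ha hb hc; grind
end periods

lemma disc13 {K : Type*} [Field K] (a b c : K) (e1 : a + b + c = -1)
    (e2 : a * b + b * c + c * a = -4) (e3 : a * b * c = -1) :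
    ((a - b) * (b - c) * (c - a)) ^ 2 = 13 ^ 2 := by
  obtain rfl : c = -1 - a - b := by linear_combination e1
  grind

lemma disc7 {K : Type*} [Field K] (a b c : K) (e1 : a + b + c = -1)
    (e2 : a * b + b * c + c * a = -2) (e3 : a * b * c = 1) :
    ((a - b) * (b - c) * (c - a)) ^ 2 = 7 ^ 2 := by
  obtain rfl : c = -1 - a - b := by linear_combination e1
  grind

lemma frob13 {K : Type*} [Field K] (p : ℕ) [Fact p.Prime] [CharP K p] (z : K)
    (hz : z ^ 13 = 1) (hp : p % 13 ≠ 0) (a b c : K)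
    (ha : a = z + z ^ 5 + z ^ 8 + z ^ 12) (hb : b = z ^ 2 + z ^ 10 + z ^ 3 + z ^ 11)
    (hc : c = z ^ 4 + z ^ 7 + z ^ 6 + z ^ 9) :
    ((p % 13 = 1 ∨ p % 13 = 5 ∨ p % 13 = 8 ∨ p % 13 = 12) ∧ a ^ p = a) ∨
    (¬ (p % 13 = 1 ∨ p % 13 = 5 ∨ p % 13 = 8 ∨ p % 13 = 12) ∧
      ((a ^ p = b ∧ b ^ p = c ∧ c ^ p = a) ∨ (a ^ p = c ∧ b ^ p = a ∧ c ^ p = b))) := by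
  have hw : z ^ p = z ^ (p % 13) := by
    conv_lhs => rw [← Nat.mod_add_div p 13, pow_add, pow_mul, hz, one_pow, mul_one]
  have fa : a ^ p = z ^ p + (z ^ p) ^ 5 + (z ^ p) ^ 8 + (z ^ p) ^ 12 := by
    simp only [ha, add_pow_char, ← pow_mul, mul_comm]
  have fb : b ^ p = (z ^ p) ^ 2 + (z ^ p) ^ 10 + (z ^ p) ^ 3 + (z ^ p) ^ 11 := by
    simp only [hb, add_pow_char, ← pow_mul, mul_comm]
  have fc : c ^ p = (z ^ p) ^ 4 + (z ^ p) ^ 7 + (z ^ p) ^ 6 + (z ^ p) ^ 9 := by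
    simp only [hc, add_pow_char, ← pow_mul, mul_comm]
  rw [hw] at fa fb fc
  have red : ∀ n, z ^ n = z ^ (n % 13) := fun n => by
    conv_lhs => rw [← Nat.mod_add_div n 13, pow_add, pow_mul, hz, one_pow, mul_one]
  have hlt : p % 13 < 13 := Nat.mod_lt _ (by norm_num)
  rw [fa, fb, fc, ha, hb, hc]
  clear fa fb fc ha hb hc hw
  generalize p % 13 = r at *
  interval_cases r
  · exact absurd rfl hp
  all_goals simp only [← pow_mul]
  · left; exact ⟨by simp, by grind⟩
  · right; exact ⟨by simp, Or.inl ⟨by grind, by grind, by grind⟩⟩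
  · right; exact ⟨by simp, Or.inl ⟨by grind, by grind, by grind⟩⟩
  · right; exact ⟨by simp, Or.inr ⟨by grind, by grind, by grind⟩⟩
  · left; exact ⟨by simp, by grind⟩
  · right; exact ⟨by simp, Or.inr ⟨by grind, by grind, by grind⟩⟩
  · right; exact ⟨by simp, Or.inr ⟨by grind, by grind, by grind⟩⟩
  · left; exact ⟨by simp, by grind⟩
  · right; exact ⟨by simp, Or.inr ⟨by grind, by grind, by grind⟩⟩
  · right; exact ⟨by simp, Or.inl ⟨by grind, by grind, by grind⟩⟩
  · right; exact ⟨by simp, Or.inl ⟨by grind, by grind, by grind⟩⟩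
  · left; exact ⟨by simp, by grind⟩

lemma frob7 {K : Type*} [Field K] (p : ℕ) [Fact p.Prime] [CharP K p] (z : K)
    (hz : z ^ 7 = 1) (hp : p % 7 ≠ 0) (a b c : K)
    (ha : a = z + z ^ 6) (hb : b = z ^ 2 + z ^ 5) (hc : c = z ^ 3 + z ^ 4) :
    ((p % 7 = 1 ∨ p % 7 = 6) ∧ a ^ p = a) ∨
    (¬ (p % 7 = 1 ∨ p % 7 = 6) ∧
      ((a ^ p = b ∧ b ^ p = c ∧ c ^ p = a) ∨ (a ^ p = c ∧ b ^ p = a ∧ c ^ p = b))) := by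
  have hw : z ^ p = z ^ (p % 7) := by
    conv_lhs => rw [← Nat.mod_add_div p 7, pow_add, pow_mul, hz, one_pow, mul_one]
  have fa : a ^ p = z ^ p + (z ^ p) ^ 6 := by
    simp only [ha, add_pow_char, ← pow_mul, mul_comm]
  have fb : b ^ p = (z ^ p) ^ 2 + (z ^ p) ^ 5 := by
    simp only [hb, add_pow_char, ← pow_mul, mul_comm]
  have fc : c ^ p = (z ^ p) ^ 3 + (z ^ p) ^ 4 := by
    simp only [hc, add_pow_char, ← pow_mul, mul_comm]
  rw [hw] at fa fb fc
  have hlt : p % 7 < 7 := Nat.mod_lt _ (by norm_num)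
  rw [fa, fb, fc, ha, hb, hc]
  clear fa fb fc ha hb hc hw
  generalize p % 7 = r at *
  interval_cases r
  · exact absurd rfl hp
  all_goals simp only [← pow_mul]
  · left; exact ⟨by simp, by grind⟩
  · right; refine ⟨by simp, ?_⟩; first | exact Or.inl ⟨by grind, by grind, by grind⟩ | exact Or.inr ⟨by grind, by grind, by grind⟩
  · right; refine ⟨by simp, ?_⟩; first | exact Or.inl ⟨by grind, by grind, by grind⟩ | exact Or.inr ⟨by grind, by grind, by grind⟩
  · right; refine ⟨by simp, ?_⟩; first | exact Or.inl ⟨by grind, by grind, by grind⟩ | exact Or.inr ⟨by grind, by grind, by grind⟩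
  · right; refine ⟨by simp, ?_⟩; first | exact Or.inl ⟨by grind, by grind, by grind⟩ | exact Or.inr ⟨by grind, by grind, by grind⟩
  · left; exact ⟨by simp, by grind⟩

lemma mod_ne (p : ℕ) (hp : p.Prime) (hN : 14 ≤ p) (q : ℕ) (h1 : 1 < q) (hq : q < 14) :
    p % q ≠ 0 := by
  intro h
  rcases (Nat.dvd_prime hp).1 (Nat.dvd_of_mod_eq_zero h) with h | h <;> omega

lemma root13 (p : ℕ) [hF : Fact p.Prime] (hN : 14 ≤ p) :
    (∃ c : ZMod p, c ^ 3 + c ^ 2 - 4 * c + 1 = 0) ↔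
      (p % 13 = 1 ∨ p % 13 = 5 ∨ p % 13 = 8 ∨ p % 13 = 12) := by
  haveI : Fact (Nat.Prime 13) := ⟨by norm_num⟩
  obtain ⟨z, hz⟩ := exists_zeta (AlgebraicClosure (ZMod p)) 13
  obtain ⟨a, ha⟩ : ∃ a, a = z + z ^ 5 + z ^ 8 + z ^ 12 := ⟨_, rfl⟩
  obtain ⟨b, hb⟩ : ∃ b, b = z ^ 2 + z ^ 10 + z ^ 3 + z ^ 11 := ⟨_, rfl⟩
  obtain ⟨c, hc⟩ : ∃ c, c = z ^ 4 + z ^ 7 + z ^ 6 + z ^ 9 := ⟨_, rfl⟩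
  obtain ⟨h13, e1, e2, e3⟩ := per13 z hz a b c ha hb hc
  haveI : CharP (AlgebraicClosure (ZMod p)) p :=
    charP_of_injective_algebraMap (algebraMap (ZMod p) _).injective p
  have hfr := frob13 p z h13 (mod_ne p hF.out hN 13 (by norm_num) (by norm_num)) a b c ha hb hc
  have hd := disc13 a b c e1 e2 e3
  have hne : (13 : AlgebraicClosure (ZMod p)) ^ 2 ≠ 0 := by
    apply pow_ne_zero
    have := natCast_ne p hN 13 (by norm_num) (by norm_num)
    have h2 := (map_ne_zero (algebraMap (ZMod p) (AlgebraicClosure (ZMod p)))).2 this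
    rw [map_natCast] at h2
    exact_mod_cast h2
  have hab : a ≠ b := by rintro rfl; apply hne; rw [← hd]; ring
  have hbc : b ≠ c := by rintro rfl; apply hne; rw [← hd]; ring
  have hca : c ≠ a := by rintro rfl; apply hne; rw [← hd]; ring
  constructor
  · rintro ⟨t, ht⟩
    rcases hfr with h | ⟨-, h⟩
    · exact h.1
    exfalso
    have hx : (algebraMap (ZMod p) (AlgebraicClosure (ZMod p)) t) ^ p =
        algebraMap (ZMod p) (AlgebraicClosure (ZMod p)) t := by
      rw [← map_pow, ZMod.pow_card]
    have hr := congrArg (algebraMap (ZMod p) (AlgebraicClosure (ZMod p))) ht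
    simp only [map_add, map_sub, map_mul, map_pow, map_ofNat, map_one, map_zero] at hr
    generalize algebraMap (ZMod p) (AlgebraicClosure (ZMod p)) t = x at hx hr
    have hprod : (x - a) * ((x - b) * (x - c)) = 0 := by
      linear_combination hr - x ^ 2 * e1 + x * e2 - e3
    rcases mul_eq_zero.1 hprod with h1 | h1
    · rw [sub_eq_zero] at h1; subst h1
      rcases h with h | h
      · exact hab (hx.symm.trans h.1)
      · exact hca.symm (hx.symm.trans h.1)
    rcases mul_eq_zero.1 h1 with h1 | h1
    · rw [sub_eq_zero] at h1; subst h1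
      rcases h with h | h
      · exact hbc (hx.symm.trans h.2.1)
      · exact hab.symm (hx.symm.trans h.2.1)
    · rw [sub_eq_zero] at h1; subst h1
      rcases h with h | h
      · exact hca (hx.symm.trans h.2.2)
      · exact hbc.symm (hx.symm.trans h.2.2)
  · intro hm
    rcases hfr with h | h
    · obtain ⟨t, ht⟩ := frob_fixed_mem p a h.2
      refine ⟨t, (algebraMap (ZMod p) (AlgebraicClosure (ZMod p))).injective ?_⟩
      simp only [map_add, map_sub, map_mul, map_pow, map_ofNat, map_one, map_zero, ht]
      linear_combination a ^ 2 * e1 - a * e2 + e3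
    · exact absurd hm h.1

lemma root7 (p : ℕ) [hF : Fact p.Prime] (hN : 14 ≤ p) :
    (∃ c : ZMod p, c ^ 3 + c ^ 2 - 2 * c - 1 = 0) ↔
      (p % 7 = 1 ∨ p % 7 = 6) := by
  haveI : Fact (Nat.Prime 7) := ⟨by norm_num⟩
  obtain ⟨z, hz⟩ := exists_zeta (AlgebraicClosure (ZMod p)) 7
  obtain ⟨a, ha⟩ : ∃ a, a = z + z ^ 6 := ⟨_, rfl⟩
  obtain ⟨b, hb⟩ : ∃ b, b = z ^ 2 + z ^ 5 := ⟨_, rfl⟩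
  obtain ⟨c, hc⟩ : ∃ c, c = z ^ 3 + z ^ 4 := ⟨_, rfl⟩
  obtain ⟨h7, e1, e2, e3⟩ := per7 z hz a b c ha hb hc
  haveI : CharP (AlgebraicClosure (ZMod p)) p :=
    charP_of_injective_algebraMap (algebraMap (ZMod p) _).injective p
  have hfr := frob7 p z h7 (mod_ne p hF.out hN 7 (by norm_num) (by norm_num)) a b c ha hb hc
  have hd := disc7 a b c e1 e2 e3
  have hne : (7 : AlgebraicClosure (ZMod p)) ^ 2 ≠ 0 := by
    apply pow_ne_zero
    have := natCast_ne p hN 7 (by norm_num) (by norm_num)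
    have h2 := (map_ne_zero (algebraMap (ZMod p) (AlgebraicClosure (ZMod p)))).2 this
    rw [map_natCast] at h2
    exact_mod_cast h2
  have hab : a ≠ b := by rintro rfl; apply hne; rw [← hd]; ring
  have hbc : b ≠ c := by rintro rfl; apply hne; rw [← hd]; ring
  have hca : c ≠ a := by rintro rfl; apply hne; rw [← hd]; ring
  constructor
  · rintro ⟨t, ht⟩
    rcases hfr with h | ⟨-, h⟩
    · exact h.1
    exfalso
    have hx : (algebraMap (ZMod p) (AlgebraicClosure (ZMod p)) t) ^ p =
        algebraMap (ZMod p) (AlgebraicClosure (ZMod p)) t := by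
      rw [← map_pow, ZMod.pow_card]
    have hr := congrArg (algebraMap (ZMod p) (AlgebraicClosure (ZMod p))) ht
    simp only [map_add, map_sub, map_mul, map_pow, map_ofNat, map_one, map_zero] at hr
    generalize algebraMap (ZMod p) (AlgebraicClosure (ZMod p)) t = x at hx hr
    have hprod : (x - a) * ((x - b) * (x - c)) = 0 := by
      linear_combination hr - x ^ 2 * e1 + x * e2 - e3
    rcases mul_eq_zero.1 hprod with h1 | h1
    · rw [sub_eq_zero] at h1; subst h1
      rcases h with h | h
      · exact hab (hx.symm.trans h.1)
      · exact hca.symm (hx.symm.trans h.1)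
    rcases mul_eq_zero.1 h1 with h1 | h1
    · rw [sub_eq_zero] at h1; subst h1
      rcases h with h | h
      · exact hbc (hx.symm.trans h.2.1)
      · exact hab.symm (hx.symm.trans h.2.1)
    · rw [sub_eq_zero] at h1; subst h1
      rcases h with h | h
      · exact hca (hx.symm.trans h.2.2)
      · exact hbc.symm (hx.symm.trans h.2.2)
  · intro hm
    rcases hfr with h | h
    · obtain ⟨t, ht⟩ := frob_fixed_mem p a h.2
      refine ⟨t, (algebraMap (ZMod p) (AlgebraicClosure (ZMod p))).injective ?_⟩
      simp only [map_add, map_sub, map_mul, map_pow, map_ofNat, map_one, map_zero, ht]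
      linear_combination a ^ 2 * e1 - a * e2 + e3
    · exact absurd hm h.1

section algebra
variable {K : Type*} [Field K]

/-- Elimination for the cyclic quadratic system. -/
lemma elim (A B C : K) (h5 : (5 : K) ≠ 0) (h13 : (13 : K) ≠ 0)
    (h1 : C ^ 2 = 2 * A + B + 4) (h2 : A ^ 2 = 2 * B + C + 4) (h3 : B ^ 2 = 2 * C + A + 4) :
    (A = B ∧ B = C) ∨ C ^ 3 + C ^ 2 - 4 * C + 1 = 0 ∨ C ^ 3 + 2 * C ^ 2 - C - 1 = 0 := by
  obtain rfl : B = C ^ 2 - 2 * A - 4 := by linear_combination -h1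
  have hl : A * (1 + 4 * C ^ 2) = C ^ 4 + 2 * C - 4 := by
    linear_combination -h3 + 4 * h2
  have hp : (C - 4) * ((C + 1) * ((C ^ 3 + C ^ 2 - 4 * C + 1) * (C ^ 3 + 2 * C ^ 2 - C - 1))) = 0 := by
    linear_combination (1 + 4 * C ^ 2) ^ 2 * h2 -
      (A * (1 + 4 * C ^ 2) + C ^ 4 + 2 * C - 4 + 4 * (1 + 4 * C ^ 2)) * hl
  rcases mul_eq_zero.1 hp with h | hp
  · left
    obtain rfl : C = 4 := by linear_combination h
    have : A = 4 := by
      apply mul_left_cancel₀ h5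
      apply mul_left_cancel₀ h13
      linear_combination hl
    subst this
    constructor <;> ring
  rcases mul_eq_zero.1 hp with h | hp
  · left
    obtain rfl : C = -1 := by linear_combination h
    have : A = -1 := by
      apply mul_left_cancel₀ h5
      linear_combination hl
    subst this
    constructor <;> ring
  · exact Or.inr (mul_eq_zero.1 hp)

lemma pap_param (A B C : K) (hA : A ≠ 0) (hC : C ≠ 0) (h2 : (2 : K) ≠ 0)
    (h : C ^ 2 = 2 * A + B + 4) :
    pap ((16 + 4 * A) / C ^ 2, 16 / C ^ 2) = ((16 + 4 * B) / A ^ 2, 16 / A ^ 2) := by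
  have hB : B = C ^ 2 - 2 * A - 4 := by linear_combination -h
  have h4 : (4 : K) ≠ 0 := by
    have := mul_ne_zero h2 h2
    norm_num at this; exact this
  have hd : (16 + 4 * A) / C ^ 2 - 16 / C ^ 2 = 4 * A / C ^ 2 := by field_simp; ring
  have hd' : 16 / C ^ 2 - (16 + 4 * A) / C ^ 2 = -(4 * A / C ^ 2) := by rw [← hd]; ring
  unfold pap
  simp only [hd, hd']
  subst hB
  ext
  · field_simp; ring
  · field_simp; ring

lemma param_ne (A C : K) (hA : A ≠ 0) (hC : C ≠ 0) (h2 : (2 : K) ≠ 0) :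
    (16 + 4 * A) / C ^ 2 ≠ 16 / C ^ 2 := by
  have h4 : (4 : K) ≠ 0 := by
    have := mul_ne_zero h2 h2
    norm_num at this; exact this
  intro h
  rw [div_left_inj' (pow_ne_zero 2 hC)] at h
  exact mul_ne_zero h4 hA (by linear_combination h)

lemma exists_of_system (A B C : K) (hA : A ≠ 0) (hB : B ≠ 0) (hC : C ≠ 0) (h2 : (2 : K) ≠ 0)
    (hAB : A ≠ B)
    (h1 : C ^ 2 = 2 * A + B + 4) (h3 : A ^ 2 = 2 * B + C + 4) (h4 : B ^ 2 = 2 * C + A + 4) :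
    ∃ x y : K, x ≠ y ∧
          (pap (x, y)).1 ≠ (pap (x, y)).2 ∧
          (pap (pap (x, y))).1 ≠ (pap (pap (x, y))).2 ∧
          pap (pap (pap (x, y))) = (x, y) ∧
          pap (x, y) ≠ (x, y) := by
  refine ⟨(16 + 4 * A) / C ^ 2, 16 / C ^ 2, param_ne A C hA hC h2, ?_⟩
  rw [pap_param A B C hA hC h2 h1, pap_param B C A hB hA h2 h3, pap_param C A B hC hB h2 h4]
  refine ⟨param_ne B A hB hA h2, param_ne C B hC hB h2, rfl, ?_⟩
  intro h
  simp only [Prod.mk.injEq] at h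
  obtain ⟨h5, h6⟩ := h
  have h44 : (4 : K) ≠ 0 := by
    have := mul_ne_zero h2 h2
    norm_num at this; exact this
  have h16 : (16 : K) ≠ 0 := by
    have := mul_ne_zero h44 h44
    norm_num at this; exact this
  have hAC : A ^ 2 = C ^ 2 := by
    rw [div_eq_div_iff (pow_ne_zero 2 hA) (pow_ne_zero 2 hC)] at h6
    exact (mul_left_cancel₀ h16 h6).symm
  rw [hAC, div_left_inj' (pow_ne_zero 2 hC)] at h5
  exact hAB (mul_left_cancel₀ h44 (by linear_combination -h5))

lemma step (z : K × K) (hy : z.2 ≠ 0) (hd : z.1 ≠ z.2) (h2 : (2 : K) ≠ 0) :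
    (pap z).2 = 16 / (4 * (z.1 - z.2) / z.2) ^ 2 ∧
    4 * ((pap z).1 - (pap z).2) / (pap z).2 = 16 / z.2 - 2 * (4 * (z.1 - z.2) / z.2) - 4 := by
  obtain ⟨x, y⟩ := z
  simp only at hy hd
  have h4 : (4 : K) ≠ 0 := by
    have := mul_ne_zero h2 h2
    norm_num at this; exact this
  obtain ⟨d, rfl⟩ : ∃ d, x = y + d := ⟨x - y, by ring⟩
  have hd0 : d ≠ 0 := by rintro rfl; simp at hd
  simp only [pap, add_sub_cancel_left]
  constructor
  · field_simp; norm_num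
  · field_simp; ring

lemma y_ne (z : K × K) (h : (pap z).1 ≠ (pap z).2) : z.2 ≠ 0 := by
  intro hy; apply h; simp [pap, hy]

lemma system_of_exists (x y : K) (h2 : (2 : K) ≠ 0) (hxy : x ≠ y)
    (hd1 : (pap (x, y)).1 ≠ (pap (x, y)).2)
    (hd2 : (pap (pap (x, y))).1 ≠ (pap (pap (x, y))).2)
    (h3 : pap (pap (pap (x, y))) = (x, y)) (hne : pap (x, y) ≠ (x, y)) :
    ∃ A B C : K, C ^ 2 = 2 * A + B + 4 ∧ A ^ 2 = 2 * B + C + 4 ∧ B ^ 2 = 2 * C + A + 4 ∧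
      ¬ (A = B ∧ B = C) := by
  have h4 : (4 : K) ≠ 0 := by
    have := mul_ne_zero h2 h2
    norm_num at this; exact this
  have h16 : (16 : K) ≠ 0 := by
    have := mul_ne_zero h4 h4
    norm_num at this; exact this
  obtain ⟨z, hz⟩ : ∃ z, z = (x, y) := ⟨_, rfl⟩
  have hd0 : z.1 ≠ z.2 := by rw [hz]; exact hxy
  rw [← hz] at hd1 hd2 h3 hne
  clear hxy hz
  have y0 := y_ne z hd1
  have y1 := y_ne _ hd2
  have y2 : (pap (pap z)).2 ≠ 0 := y_ne _ (by rw [h3]; exact hd0)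
  obtain ⟨s0, t0⟩ := step z y0 hd0 h2
  obtain ⟨s1, t1⟩ := step _ y1 hd1 h2
  obtain ⟨s2, t2⟩ := step _ y2 hd2 h2
  rw [h3] at s2 t2
  have hx0 : z.1 = z.2 * (1 + (4 * (z.1 - z.2) / z.2) / 4) := by field_simp; ring
  have hx1 : (pap z).1 = (pap z).2 * (1 + (4 * ((pap z).1 - (pap z).2) / (pap z).2) / 4) := by
    field_simp; ring
  generalize pap (pap z) = w at *
  generalize pap z = v at *
  generalize 4 * (z.1 - z.2) / z.2 = A at *
  generalize 4 * (v.1 - v.2) / v.2 = B at *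
  generalize 4 * (w.1 - w.2) / w.2 = C at *
  have key : ∀ u t : K, u ≠ 0 → u = 16 / t ^ 2 → 16 / u = t ^ 2 := by
    intro u t hu h
    rw [h]; field_simp
  refine ⟨A, B, C, ?_, ?_, ?_, ?_⟩
  · rw [← key _ _ y0 s2]; linear_combination -t0
  · rw [← key _ _ y1 s0]; linear_combination -t1
  · rw [← key _ _ y2 s1]; linear_combination -t2
  · rintro ⟨rfl, rfl⟩
    apply hne
    have e : v.2 = z.2 := s0.trans s2.symm
    ext
    · rw [hx0, hx1, e]
    · exact e

lemma three_of_root13 (h2 : (2 : K) ≠ 0) (h13 : (13 : K) ≠ 0) (C : K)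
    (hC : C ^ 3 + C ^ 2 - 4 * C + 1 = 0) :
    ∃ A B C : K, A ≠ 0 ∧ B ≠ 0 ∧ C ≠ 0 ∧ A ≠ B ∧
      C ^ 2 = 2 * A + B + 4 ∧ A ^ 2 = 2 * B + C + 4 ∧ B ^ 2 = 2 * C + A + 4 := by
  have hp : (C ^ 2 + C - 3) * (2 - 2 * C - C ^ 2) * C = -1 := by grind
  have hn : (C ^ 2 + C - 3) * (2 - 2 * C - C ^ 2) * C ≠ 0 := by rw [hp]; simp
  simp only [ne_eq, mul_eq_zero, not_or] at hn
  refine ⟨C ^ 2 + C - 3, 2 - 2 * C - C ^ 2, C, hn.1.1, hn.1.2, hn.2, ?_, by grind, by grind, by grind⟩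
  intro h
  have : (C - 1) * (2 * C + 5) = 0 := by linear_combination h
  rcases mul_eq_zero.1 this with h | h
  · obtain rfl : C = 1 := by linear_combination h
    norm_num at hC
  · apply h13
    linear_combination 8 * hC - (4 * C ^ 2 - 6 * C - 1) * h

lemma three_of_root7 (h2 : (2 : K) ≠ 0) (h7 : (7 : K) ≠ 0) (u : K)
    (hu : u ^ 3 + u ^ 2 - 2 * u - 1 = 0) :
    ∃ A B C : K, A ≠ 0 ∧ B ≠ 0 ∧ C ≠ 0 ∧ A ≠ B ∧
      C ^ 2 = 2 * A + B + 4 ∧ A ^ 2 = 2 * B + C + 4 ∧ B ^ 2 = 2 * C + A + 4 := by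
  have hp : (-1 - u) * (u + u ^ 2 - 2) * (1 - u ^ 2) = 1 := by grind
  have hn : (-1 - u) * (u + u ^ 2 - 2) * (1 - u ^ 2) ≠ 0 := by rw [hp]; simp
  simp only [ne_eq, mul_eq_zero, not_or] at hn
  refine ⟨-1 - u, u + u ^ 2 - 2, 1 - u ^ 2, hn.1.1, hn.1.2, hn.2, ?_, by grind, by grind, by grind⟩
  intro h
  have : u ^ 2 + 2 * u - 1 = 0 := by linear_combination -h
  grind
end algebra

theorem pap_period_three_mod_condition :
    ∃ N : ℕ, ∀ p : ℕ, N ≤ p → (hp : p.Prime) →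
      haveI : Fact p.Prime := ⟨hp⟩
      ((∃ x y : ZMod p,
          x ≠ y ∧
          (pap (x, y)).1 ≠ (pap (x, y)).2 ∧
          (pap (pap (x, y))).1 ≠ (pap (pap (x, y))).2 ∧
          pap (pap (pap (x, y))) = (x, y) ∧
          pap (x, y) ≠ (x, y)) ↔
        (p % 13 = 1 ∨ p % 13 = 5 ∨ p % 13 = 8 ∨ p % 13 = 12 ∨ p % 7 = 1 ∨ p % 7 = 6)) := by
  refine ⟨14, fun p hN hp => ?_⟩
  haveI : Fact p.Prime := ⟨hp⟩
  have h2 : (2 : ZMod p) ≠ 0 := by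
    exact_mod_cast natCast_ne p hN 2 (by norm_num) (by norm_num)
  have h5 : (5 : ZMod p) ≠ 0 := by
    exact_mod_cast natCast_ne p hN 5 (by norm_num) (by norm_num)
  have h7 : (7 : ZMod p) ≠ 0 := by
    exact_mod_cast natCast_ne p hN 7 (by norm_num) (by norm_num)
  have h13 : (13 : ZMod p) ≠ 0 := by
    exact_mod_cast natCast_ne p hN 13 (by norm_num) (by norm_num)
  have r13 := root13 p hN
  have r7 := root7 p hN
  constructor
  · rintro ⟨x, y, a1, a2, a3, a4, a5⟩
    obtain ⟨A, B, C, b1, b2, b3, b4⟩ := system_of_exists x y h2 a1 a2 a3 a4 a5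
    rcases elim A B C h5 h13 b1 b2 b3 with h | h | h
    · exact absurd h b4
    · have := r13.1 ⟨C, h⟩
      omega
    · have := r7.1 ⟨-1 - C, by linear_combination -h⟩
      omega
  · intro h
    have h' : (p % 13 = 1 ∨ p % 13 = 5 ∨ p % 13 = 8 ∨ p % 13 = 12) ∨ (p % 7 = 1 ∨ p % 7 = 6) := by
      omega
    obtain ⟨A, B, C, hA, hB, hC, hAB, b1, b2, b3⟩ : ∃ A B C : ZMod p, A ≠ 0 ∧ B ≠ 0 ∧ C ≠ 0 ∧ A ≠ B ∧
        C ^ 2 = 2 * A + B + 4 ∧ A ^ 2 = 2 * B + C + 4 ∧ B ^ 2 = 2 * C + A + 4 := by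
      rcases h' with h | h
      · obtain ⟨c, hc⟩ := r13.2 h
        exact three_of_root13 h2 h13 c hc
      · obtain ⟨c, hc⟩ := r7.2 h
        exact three_of_root7 h2 h7 c hc
    exact exists_of_system A B C hA hB hC h2 hAB b1 b2 b3
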